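/- arXiv:1101.5355 — 2 statements merged into one kernel-verified Lean document; each statement's English description precedes it below -/
import Mathlib

section
/- There is an absolute constant C > 0 with the following property. Let P₁ and P₂ be nonzero univariate polynomials with integer coefficients, each of degree at most d (with d ≥ 2), all of whose coefficients have absolute value at most 2^τ, where τ ≥ 1. If z₁ is a complex root of P₁, z₂ is a complex root of P₂, and z₁ ≠ z₂, then |z₁ − z₂| ≥ 2^{−C(d·log d + τ·d)}. -/
/-!
Mahler's argument. Let `s ∈ ℤ[X]` have degree `n`, leading coefficient `a` and distinct complex
roots `αᵢ`, with Vandermonde matrix `V`. Its discriminant `a ^ (2 * (n - 1)) * (det V) ^ 2` is a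
nonzero integer, so `1 ≤ |a| ^ (n - 1) * |det V|`. Subtracting the row of `z₂` from that of `z₁`
extracts a factor `z₁ - z₂` from `det V`, and bounding the remaining rows entrywise gives
`1 ≤ n! * n * |z₁ - z₂| * M(s) ^ (n - 1)` with `M` the Mahler measure. As `M` is multiplicative and
at least `1` on nonzero integer polynomials, the inequality passes from the squarefree part of
`P₁ * P₂` to `P₁ * P₂` itself, where `M(P₁ * P₂) = M(P₁) * M(P₂)` is controlled by the coefficients.
Working with `M` rather than with coefficients is essential: the coefficients of a squarefree part
may exceed those of the polynomial by a factor exponential in `d`, which would cost `d ^ 2` in the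
exponent.
-/

open Polynomial
open scoped Nat nonZeroDivisors

section Vandermonde

variable {R : Type*} [NormedCommRing R] [NormOneClass R]

lemma norm_det_le_factorial_mul_prod {ι : Type*} [Fintype ι] [DecidableEq ι]
    {A : Matrix ι ι R} {c : ι → ℝ} (hA : ∀ i j, ‖A i j‖ ≤ c i) :
    ‖A.det‖ ≤ (Fintype.card ι)! * ∏ i, c i := by
  have term_le (σ : Equiv.Perm ι) : ‖Equiv.Perm.sign σ • ∏ i, A (σ i) i‖ ≤ ∏ i, c i :=
    calc ‖Equiv.Perm.sign σ • ∏ i, A (σ i) i‖ = ‖∏ i, A (σ i) i‖ := by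
          rcases Int.units_eq_one_or (Equiv.Perm.sign σ) with h | h <;> simp [h]
      _ ≤ ∏ i, ‖A (σ i) i‖ := Finset.norm_prod_le _ _
      _ ≤ ∏ i, c (σ i) := Finset.prod_le_prod (fun _ _ ↦ norm_nonneg _) fun i _ ↦ hA (σ i) i
      _ = ∏ i, c i := Equiv.prod_comp σ c
  calc ‖A.det‖ ≤ ∑ _σ : Equiv.Perm ι, ∏ i, c i := by
        rw [Matrix.det_apply]
        exact norm_sum_le_of_le _ fun σ _ ↦ term_le σ
    _ = (Fintype.card ι)! * ∏ i, c i := by simp [Fintype.card_perm]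

lemma norm_pow_sub_pow_le_natCast_mul {x y : R} {r : ℝ} (hx : ‖x‖ ≤ r) (hy : ‖y‖ ≤ r) (n : ℕ) :
    ‖x ^ n - y ^ n‖ ≤ n * r ^ (n - 1) * ‖x - y‖ := by
  have term_le : ∀ i ∈ Finset.range n, ‖x ^ i * y ^ (n - 1 - i)‖ ≤ r ^ (n - 1) := by
    intro i hi
    have hr : 0 ≤ r := (norm_nonneg x).trans hx
    calc ‖x ^ i * y ^ (n - 1 - i)‖ ≤ ‖x‖ ^ i * ‖y‖ ^ (n - 1 - i) :=
          (norm_mul_le _ _).trans (by gcongr <;> exact norm_pow_le _ _)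
      _ ≤ r ^ i * r ^ (n - 1 - i) := by gcongr
      _ = r ^ (n - 1) := by
          rw [← pow_add, Nat.add_sub_of_le (Nat.le_sub_one_of_lt (Finset.mem_range.1 hi))]
  calc ‖x ^ n - y ^ n‖ ≤ ‖∑ i ∈ Finset.range n, x ^ i * y ^ (n - 1 - i)‖ * ‖x - y‖ := by
        rw [← geom_sum₂_mul]
        exact norm_mul_le _ _
    _ ≤ n * r ^ (n - 1) * ‖x - y‖ := by
        gcongr
        simpa using norm_sum_le_of_le _ term_le

lemma norm_det_vandermonde_le {n : ℕ} (α : Fin n → R) {i j : Fin n} (hij : i ≠ j) :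
    ‖(Matrix.vandermonde α).det‖ ≤ n ! * n * ‖α i - α j‖ * (∏ k, max 1 ‖α k‖) ^ (n - 1) := by
  wlog hle : ‖α j‖ ≤ ‖α i‖ generalizing i j
  · rw [norm_sub_rev]
    exact this hij.symm (le_of_not_ge hle)
  let c : Fin n → ℝ := fun k ↦
    max 1 ‖α k‖ ^ (n - 1) * if k = i then n * ‖α i - α j‖ else 1
  have entry_le (k l : Fin n) :
      ‖(Matrix.vandermonde α).updateRow i
        (Matrix.vandermonde α i + (-1 : R) • Matrix.vandermonde α j) k l‖ ≤ c k := by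
    have hl : (l : ℕ) ≤ n - 1 := Nat.le_sub_one_of_lt l.isLt
    rcases eq_or_ne k i with rfl | hk
    · calc _ = ‖α k ^ (l : ℕ) - α j ^ (l : ℕ)‖ := by
            simp [Matrix.vandermonde_apply, sub_eq_add_neg]
        _ ≤ l * max 1 ‖α k‖ ^ (l - 1 : ℕ) * ‖α k - α j‖ :=
            norm_pow_sub_pow_le_natCast_mul (le_max_right _ _)
              (hle.trans (le_max_right _ _)) _
        _ ≤ n * max 1 ‖α k‖ ^ (n - 1) * ‖α k - α j‖ := by
            gcongr
            · exact l.isLt.le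
            · exact le_max_left _ _
            · exact l.isLt.le
        _ = c k := by simp only [c, if_true]; ring
    · calc _ = ‖α k ^ (l : ℕ)‖ := by
            rw [Matrix.updateRow_ne hk, Matrix.vandermonde_apply]
        _ ≤ max 1 ‖α k‖ ^ (l : ℕ) := (norm_pow_le _ _).trans (by gcongr; exact le_max_right _ _)
        _ ≤ max 1 ‖α k‖ ^ (n - 1) := pow_le_pow_right₀ (le_max_left _ _) hl
        _ = c k := by simp [c, hk]
  calc ‖(Matrix.vandermonde α).det‖ ≤ (Fintype.card (Fin n))! * ∏ k, c k := by
        rw [← Matrix.det_updateRow_add_smul_self (Matrix.vandermonde α) hij (-1)]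
        exact norm_det_le_factorial_mul_prod entry_le
    _ = n ! * n * ‖α i - α j‖ * (∏ k, max 1 ‖α k‖) ^ (n - 1) := by
        simp only [c, Finset.prod_mul_distrib, Finset.prod_pow, Fintype.card_fin,
          Finset.prod_ite_eq', Finset.mem_univ, if_true]
        ring

end Vandermonde

section Discriminant

lemma discr_map_of_injective {R S : Type*} [CommRing R] [CommRing S] [IsDomain S] {f : R →+* S}
    (hf : Function.Injective f) (p : R[X]) : (p.map f).discr = f p.discr := by
  rcases Nat.eq_zero_or_pos p.natDegree with hdeg | hdeg
  · obtain ⟨r, rfl⟩ := natDegree_eq_zero.1 hdeg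
    simp
  have hnat : (p.map f).natDegree = p.natDegree := natDegree_map_eq_of_injective hf p
  have hlead : (p.map f).leadingCoeff = f p.leadingCoeff := leadingCoeff_map_of_injective hf p
  have hlead_ne : f p.leadingCoeff ≠ 0 := by
    rw [← hlead, leadingCoeff_ne_zero]
    exact ne_zero_of_natDegree_gt (hdeg.trans_eq hnat.symm)
  have hp := congrArg f (resultant_deriv (natDegree_pos_iff_degree_pos.1 hdeg))
  have hpf := resultant_deriv (natDegree_pos_iff_degree_pos.1 (hdeg.trans_eq hnat.symm))
  rw [hnat, hlead, derivative_map, resultant_map_map, hp] at hpf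
  simp only [map_mul, map_pow, map_neg, map_one] at hpf
  exact (mul_left_cancel₀ (mul_ne_zero (pow_ne_zero _ (neg_ne_zero.2 one_ne_zero)) hlead_ne)
    hpf).symm

lemma eval_derivative_prod_X_sub_C {R ι : Type*} [CommRing R] [Fintype ι] [DecidableEq ι]
    (α : ι → R) (i : ι) :
    (derivative (∏ j, (X - C (α j)))).eval (α i) = ∏ j ∈ {i}ᶜ, (α i - α j) := by
  rw [Fintype.prod_eq_mul_prod_compl i]
  simp [derivative_mul, eval_prod]

lemma prod_prod_compl_sub_eq_det_vandermonde_sq {R : Type*} [CommRing R] {n : ℕ} (α : Fin n → R) :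
    ∏ i, ∏ j ∈ {i}ᶜ, (α i - α j) =
      (-1) ^ (n * (n - 1) / 2) * (Matrix.vandermonde α).det ^ 2 := by
  have hcard : ∑ i : Fin n, (Finset.Ioi i).card = n * (n - 1) / 2 := by
    simp only [Fin.card_Ioi]
    rw [Fin.sum_univ_eq_sum_range fun i ↦ n - 1 - i,
      Finset.sum_range_reflect (fun i ↦ i), Finset.sum_range_id]
  calc ∏ i, ∏ j ∈ {i}ᶜ, (α i - α j)
      = ∏ i, ∏ j ∈ Finset.Ioi i, (α i - α j) * (α j - α i) :=
        (Finset.prod_prod_Ioi_mul_eq_prod_prod_off_diag fun j i ↦ α i - α j).symm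
    _ = ∏ i, ∏ j ∈ Finset.Ioi i, -1 * (α j - α i) ^ 2 := by
        refine Finset.prod_congr rfl fun i _ ↦ Finset.prod_congr rfl fun j _ ↦ ?_
        ring
    _ = (-1) ^ (n * (n - 1) / 2) * (Matrix.vandermonde α).det ^ 2 := by
        simp only [Finset.prod_mul_distrib, Finset.prod_pow, Finset.prod_const,
          Finset.prod_pow_eq_pow_sum, hcard, Matrix.det_vandermonde]

lemma discr_C_mul_prod_X_sub_C {R : Type*} [CommRing R] [IsDomain R] {n : ℕ} {a : R} (ha : a ≠ 0)
    (α : Fin n → R) :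
    (C a * ∏ i, (X - C (α i))).discr = a ^ (2 * (n - 1)) * (Matrix.vandermonde α).det ^ 2 := by
  rcases Nat.eq_zero_or_pos n with rfl | hn
  · simp
  set f := C a * ∏ i, (X - C (α i)) with hf
  have hmonic : (∏ i, (X - C (α i))).Monic := monic_prod_X_sub_C _ _
  have hnat : f.natDegree = n := by
    simp [hf, natDegree_C_mul ha]
  have hlead : f.leadingCoeff = a := by simp [hf, leadingCoeff_mul, hmonic.leadingCoeff]
  have hroots : f.roots = Finset.univ.val.map α := by
    rw [hf, roots_C_mul _ ha, ← roots_multiset_prod_X_sub_C (Finset.univ.val.map α),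
      Multiset.map_map]
    rfl
  have hsplits : f.Splits := (Splits.C a).mul (.prod fun i _ ↦ .X_sub_C (α i))
  have hres : f.resultant (derivative f) n (n - 1) =
      a ^ (n - 1) * ∏ i, a * ∏ j ∈ {i}ᶜ, (α i - α j) := by
    have h := resultant_eq_prod_eval f (derivative f) (n - 1)
      (hnat ▸ natDegree_derivative_le f) hsplits
    rw [hnat, hlead, hroots, Multiset.map_map] at h
    rw [h]
    congr 1
    refine Finset.prod_congr rfl fun i _ ↦ ?_
    simp [hf, eval_derivative_prod_X_sub_C]
  have hdiscr := resultant_deriv (natDegree_pos_iff_degree_pos.1 (hn.trans_eq hnat.symm))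
  rw [hnat, hlead, hres, Finset.prod_mul_distrib, Finset.prod_const, Finset.card_univ,
    Fintype.card_fin, prod_prod_compl_sub_eq_det_vandermonde_sq] at hdiscr
  refine mul_left_cancel₀ (mul_ne_zero (pow_ne_zero _ (neg_ne_zero.2 one_ne_zero)) ha)
    (hdiscr.symm.trans ?_)
  obtain ⟨m, rfl⟩ := Nat.exists_eq_succ_of_ne_zero hn.ne'
  rw [Nat.succ_sub_one, pow_succ]
  ring

lemma exists_eq_C_leadingCoeff_mul_prod_X_sub_C {R : Type*} [CommRing R] [IsDomain R] {f : R[X]}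
    (hf : f.Splits) :
    ∃ α : Fin f.natDegree → R, f = C f.leadingCoeff * ∏ i, (X - C (α i)) := by
  have hcard : f.natDegree = f.roots.toList.length := by
    rw [Multiset.length_toList, hf.natDegree_eq_card_roots]
  rw [hcard]
  refine ⟨f.roots.toList.get, ?_⟩
  conv_lhs => rw [hf.eq_prod_roots, ← f.roots.coe_toList, Multiset.map_coe, Multiset.prod_coe]
  rw [← Fin.prod_univ_fun_getElem]
  rfl

lemma discr_ne_zero_of_separable_of_splits {K : Type*} [Field K] {f : K[X]} (hsep : f.Separable)
    (hsplits : f.Splits) : f.discr ≠ 0 := by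
  obtain ⟨α, hα⟩ := exists_eq_C_leadingCoeff_mul_prod_X_sub_C hsplits
  have hlead : f.leadingCoeff ≠ 0 := leadingCoeff_ne_zero.2 hsep.ne_zero
  have hinj : Function.Injective α :=
    separable_prod_X_sub_C_iff.1 (hsep.of_dvd (Dvd.intro_left _ hα.symm))
  rw [hα, discr_C_mul_prod_X_sub_C hlead]
  exact mul_ne_zero (pow_ne_zero _ hlead)
    (pow_ne_zero _ (Matrix.det_vandermonde_ne_zero_iff.2 hinj))

end Discriminant

section SquarefreePart

variable {R K : Type*} [CommRing R] [IsDomain R] [NormalizedGCDMonoid R] [Field K] [Algebra R K]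
  [IsFractionRing R K]

lemma exists_isPrimitive_associated_map {f : K[X]} (hf : f ≠ 0) :
    ∃ p : R[X], p.IsPrimitive ∧ Associated (p.map (algebraMap R K)) f := by
  obtain ⟨b, hb, hbf⟩ := IsLocalization.integerNormalization_spec R⁰ f
  set q := IsLocalization.integerNormalization R⁰ f
  have hmap : C (algebraMap R K q.content) * q.primPart.map (algebraMap R K) =
      C (algebraMap R K b) * f := by
    rw [← map_C, ← Polynomial.map_mul, ← q.eq_C_content_mul_primPart, hbf,
      ← algebraMap_smul K b f, smul_eq_C_mul]
  have hq : q ≠ 0 := by rwa [Ne, IsFractionRing.integerNormalization_eq_zero_iff]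
  have hcontent : IsUnit (C (algebraMap R K q.content)) := by
    simpa [isUnit_C, content_eq_zero_iff] using hq
  have hdenom : IsUnit (C (algebraMap R K b)) := by
    simpa [isUnit_C] using nonZeroDivisors.ne_zero hb
  refine ⟨q.primPart, q.isPrimitive_primPart, ?_⟩
  rw [← associated_isUnit_mul_left_iff hcontent, hmap, associated_isUnit_mul_left_iff hdenom]
  exact Associated.refl f

lemma exists_dvd_separable_map_aeval_eq_zero [PerfectField K] {L : Type*} [CommRing L]
    [IsReduced L] [Algebra R L] [Algebra K L] [IsScalarTower R K L] {P : R[X]} (hP : P ≠ 0) :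
    ∃ s : R[X], s ∣ P ∧ (s.map (algebraMap R K)).Separable ∧
      ∀ z : L, aeval z P = 0 → aeval z s = 0 := by
  classical
  have hPK : P.map (algebraMap R K) ≠ 0 :=
    (Polynomial.map_ne_zero_iff (IsFractionRing.injective R K)).2 hP
  obtain ⟨s, hprim, hassoc⟩ := exists_isPrimitive_associated_map (R := R)
    (UniqueFactorizationMonoid.radical_ne_zero (a := P.map (algebraMap R K)))
  obtain ⟨k, hk⟩ := UniqueFactorizationMonoid.exists_dvd_radical_self_pow hPK
  refine ⟨s, ?_, ?_, fun z hz ↦ ?_⟩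
  · exact hprim.dvd_of_fraction_map_dvd_fraction_map
      (hassoc.dvd.trans UniqueFactorizationMonoid.radical_dvd_self)
  · rw [PerfectField.separable_iff_squarefree, hassoc.squarefree_iff]
    exact UniqueFactorizationMonoid.squarefree_radical
  · have hdvd : P.map (algebraMap R K) ∣ s.map (algebraMap R K) ^ k :=
      hk.trans (pow_dvd_pow_of_dvd hassoc.symm.dvd k)
    have hroot := aeval_eq_zero_of_dvd_aeval_eq_zero hdvd
      ((aeval_map_algebraMap K z P).trans hz)
    rw [map_pow, aeval_map_algebraMap] at hroot
    exact eq_zero_of_pow_eq_zero hroot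

end SquarefreePart

section MahlerMeasure

lemma mahlerMeasure_C_mul_prod_X_sub_C {ι : Type*} [Fintype ι] (a : ℂ) (α : ι → ℂ) :
    (C a * ∏ i, (X - C (α i))).mahlerMeasure = ‖a‖ * ∏ i, max 1 ‖α i‖ := by
  have hprod : (∏ i, (X - C (α i))).mahlerMeasure = ∏ i, (X - C (α i)).mahlerMeasure := by
    rw [Finset.prod_eq_multiset_prod, prod_mahlerMeasure_eq_mahlerMeasure_prod, Multiset.map_map]
    rfl
  simp only [mahlerMeasure_mul, mahlerMeasure_const, hprod, mahlerMeasure_X_sub_C]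

lemma mahlerMeasure_map_le_of_dvd {p q : ℤ[X]} (hpq : p ∣ q) (hq : q ≠ 0) :
    (p.map (Int.castRingHom ℂ)).mahlerMeasure ≤ (q.map (Int.castRingHom ℂ)).mahlerMeasure := by
  obtain ⟨r, rfl⟩ := hpq
  rw [Polynomial.map_mul, mahlerMeasure_mul]
  exact le_mul_of_one_le_right (mahlerMeasure_nonneg _)
    (one_le_mahlerMeasure_of_ne_zero (right_ne_zero_of_mul hq))

lemma mahlerMeasure_map_le_sqrt_mul {p : ℤ[X]} {d : ℕ} {B : ℝ} (hd : p.natDegree ≤ d)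
    (hB : ∀ i, (|p.coeff i| : ℝ) ≤ B) :
    (p.map (Int.castRingHom ℂ)).mahlerMeasure ≤ √(d + 1) * B := by
  have hsup : (p.map (Int.castRingHom ℂ)).supNorm ≤ B := by
    obtain ⟨i, hi⟩ := (p.map (Int.castRingHom ℂ)).exists_eq_supNorm
    rw [hi, coeff_map, eq_intCast, Complex.norm_intCast]
    exact hB i
  refine (mahlerMeasure_le_sqrt_natDegree_add_one_mul_supNorm _).trans ?_
  gcongr
  · exact supNorm_nonneg _
  · exact natDegree_map_le.trans hd

lemma norm_discr_le_of_ne_of_isRoot {f : ℂ[X]} {z₁ z₂ : ℂ} (hf : f ≠ 0) (h₁ : f.IsRoot z₁)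
    (h₂ : f.IsRoot z₂) (hne : z₁ ≠ z₂) :
    ‖f.discr‖ ≤
      (f.natDegree ! * f.natDegree * ‖z₁ - z₂‖ * f.mahlerMeasure ^ (f.natDegree - 1)) ^ 2 := by
  obtain ⟨α, hα⟩ := exists_eq_C_leadingCoeff_mul_prod_X_sub_C (IsAlgClosed.splits f)
  have hlead : f.leadingCoeff ≠ 0 := leadingCoeff_ne_zero.2 hf
  have exists_root_index {z : ℂ} (hz : f.IsRoot z) : ∃ i, α i = z := by
    rw [hα] at hz
    obtain ⟨i, hi⟩ : ∃ i, z = α i := by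
      simpa [hlead, eval_prod, Finset.prod_eq_zero_iff, sub_eq_zero] using hz
    exact ⟨i, hi.symm⟩
  obtain ⟨i, rfl⟩ := exists_root_index h₁
  obtain ⟨j, rfl⟩ := exists_root_index h₂
  have hij : i ≠ j := fun h ↦ hne (congrArg α h)
  have hdiscr : f.discr =
      f.leadingCoeff ^ (2 * (f.natDegree - 1)) * (Matrix.vandermonde α).det ^ 2 :=
    (congrArg discr hα).trans (discr_C_mul_prod_X_sub_C hlead α)
  have hmahler : f.mahlerMeasure = ‖f.leadingCoeff‖ * ∏ k, max 1 ‖α k‖ :=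
    (congrArg mahlerMeasure hα).trans (mahlerMeasure_C_mul_prod_X_sub_C _ α)
  calc ‖f.discr‖ = (‖f.leadingCoeff‖ ^ (f.natDegree - 1) * ‖(Matrix.vandermonde α).det‖) ^ 2 := by
        rw [hdiscr, norm_mul, norm_pow, norm_pow]
        ring
    _ ≤ (‖f.leadingCoeff‖ ^ (f.natDegree - 1) * (f.natDegree ! * f.natDegree * ‖α i - α j‖ *
          (∏ k, max 1 ‖α k‖) ^ (f.natDegree - 1))) ^ 2 := by
        gcongr
        exact norm_det_vandermonde_le α hij
    _ = _ := by
        rw [hmahler]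
        ring

end MahlerMeasure

section RootSeparation

variable {z₁ z₂ : ℂ}

theorem one_le_norm_sub_mul_mahlerMeasure_pow_of_separable {s : ℤ[X]}
    (hsep : (s.map (Int.castRingHom ℂ)).Separable) (h₁ : aeval z₁ s = 0) (h₂ : aeval z₂ s = 0)
    (hne : z₁ ≠ z₂) :
    1 ≤ s.natDegree ! * s.natDegree * ‖z₁ - z₂‖ *
      (s.map (Int.castRingHom ℂ)).mahlerMeasure ^ (s.natDegree - 1) := by
  have hinj : Function.Injective (Int.castRingHom ℂ) := (Int.castRingHom ℂ).injective_int
  have hroot {z : ℂ} (hz : aeval z s = 0) : (s.map (Int.castRingHom ℂ)).IsRoot z := by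
    rwa [IsRoot, eval_map, ← algebraMap_int_eq, ← aeval_def]
  have hdiscr : (s.map (Int.castRingHom ℂ)).discr = (s.discr : ℂ) :=
    discr_map_of_injective hinj s
  have hdiscr_ne : s.discr ≠ 0 := by
    rw [← Int.cast_ne_zero (α := ℂ), ← hdiscr]
    exact discr_ne_zero_of_separable_of_splits hsep (IsAlgClosed.splits _)
  have one_le_discr : 1 ≤ ‖(s.map (Int.castRingHom ℂ)).discr‖ := by
    rw [hdiscr, Complex.norm_intCast]
    exact_mod_cast Int.one_le_abs hdiscr_ne
  have hle := one_le_discr.trans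
    (norm_discr_le_of_ne_of_isRoot hsep.ne_zero (hroot h₁) (hroot h₂) hne)
  rw [natDegree_map_eq_of_injective hinj] at hle
  have mahler_nonneg := mahlerMeasure_nonneg (s.map (Int.castRingHom ℂ))
  exact (one_le_sq_iff₀ (by positivity)).1 hle

theorem one_le_norm_sub_mul_mahlerMeasure_pow {P : ℤ[X]} (hP : P ≠ 0) (h₁ : aeval z₁ P = 0)
    (h₂ : aeval z₂ P = 0) (hne : z₁ ≠ z₂) :
    1 ≤ P.natDegree ! * P.natDegree * ‖z₁ - z₂‖ *
      (P.map (Int.castRingHom ℂ)).mahlerMeasure ^ (P.natDegree - 1) := by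
  obtain ⟨s, hdvd, hsepℚ, hroot⟩ :=
    exists_dvd_separable_map_aeval_eq_zero (K := ℚ) (L := ℂ) hP
  have hsep : (s.map (Int.castRingHom ℂ)).Separable := by
    rw [← algebraMap_int_eq, IsScalarTower.algebraMap_eq ℤ ℚ ℂ, ← Polynomial.map_map]
    exact hsepℚ.map
  have hdeg : s.natDegree ≤ P.natDegree := natDegree_le_of_dvd hdvd hP
  have hmahler := mahlerMeasure_map_le_of_dvd hdvd hP
  refine (one_le_norm_sub_mul_mahlerMeasure_pow_of_separable hsep (hroot z₁ h₁) (hroot z₂ h₂)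
    hne).trans ?_
  have hpow : (s.map (Int.castRingHom ℂ)).mahlerMeasure ^ (s.natDegree - 1) ≤
      (P.map (Int.castRingHom ℂ)).mahlerMeasure ^ (P.natDegree - 1) :=
    (pow_le_pow_left₀ (mahlerMeasure_nonneg _) hmahler _).trans
      (pow_le_pow_right₀ (one_le_mahlerMeasure_of_ne_zero hP) (Nat.sub_le_sub_right hdeg 1))
  gcongr
  exact pow_nonneg (mahlerMeasure_nonneg _) _

theorem one_le_norm_sub_mul_of_abs_coeff_le {P₁ P₂ : ℤ[X]} {d : ℕ} {B : ℝ} (hP₁ : P₁ ≠ 0)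
    (hP₂ : P₂ ≠ 0) (hd₁ : P₁.natDegree ≤ d) (hd₂ : P₂.natDegree ≤ d)
    (hB₁ : ∀ i, (|P₁.coeff i| : ℝ) ≤ B) (hB₂ : ∀ i, (|P₂.coeff i| : ℝ) ≤ B)
    (h₁ : aeval z₁ P₁ = 0) (h₂ : aeval z₂ P₂ = 0) (hne : z₁ ≠ z₂) :
    1 ≤ (2 * d)! * (2 * d) * ‖z₁ - z₂‖ * ((d + 1) * B ^ 2) ^ (2 * d - 1) := by
  have hP : P₁ * P₂ ≠ 0 := mul_ne_zero hP₁ hP₂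
  have hdeg : (P₁ * P₂).natDegree ≤ 2 * d := natDegree_mul_le.trans (by lia)
  have hmahler : ((P₁ * P₂).map (Int.castRingHom ℂ)).mahlerMeasure ≤ (d + 1) * B ^ 2 :=
    calc ((P₁ * P₂).map (Int.castRingHom ℂ)).mahlerMeasure
        = (P₁.map (Int.castRingHom ℂ)).mahlerMeasure *
            (P₂.map (Int.castRingHom ℂ)).mahlerMeasure := by
          rw [Polynomial.map_mul, mahlerMeasure_mul]
      _ ≤ √(d + 1) * B * (√(d + 1) * B) :=
          mul_le_mul (mahlerMeasure_map_le_sqrt_mul hd₁ hB₁) (mahlerMeasure_map_le_sqrt_mul hd₂ hB₂)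
            (mahlerMeasure_nonneg _)
            ((mahlerMeasure_nonneg _).trans (mahlerMeasure_map_le_sqrt_mul hd₁ hB₁))
      _ = (d + 1) * B ^ 2 := by
          rw [mul_mul_mul_comm, Real.mul_self_sqrt (by positivity), sq]
  have one_le_mahler := one_le_mahlerMeasure_of_ne_zero hP
  calc (1 : ℝ) ≤ _ := one_le_norm_sub_mul_mahlerMeasure_pow hP (by simp [h₁]) (by simp [h₂]) hne
    _ ≤ (2 * d)! * (2 * d : ℕ) * ‖z₁ - z₂‖ *
          ((P₁ * P₂).map (Int.castRingHom ℂ)).mahlerMeasure ^ (2 * d - 1) := by gcongr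
    _ ≤ (2 * d)! * (2 * d) * ‖z₁ - z₂‖ * ((d + 1) * B ^ 2) ^ (2 * d - 1) := by
        push_cast
        gcongr

lemma factorial_two_mul_mul_pow_le_pow {d : ℕ} (hd : 2 ≤ d) :
    (2 * d)! * (2 * d) * (d + 1) ^ (2 * d - 1) ≤ d ^ (8 * d) := by
  have h_two_mul : 2 * d ≤ d ^ 2 := by nlinarith
  have h_succ : d + 1 ≤ d ^ 2 := by nlinarith
  calc (2 * d)! * (2 * d) * (d + 1) ^ (2 * d - 1)
      ≤ (2 * d) ^ (2 * d) * (2 * d) * (d + 1) ^ (2 * d - 1) := by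
        gcongr
        exact Nat.factorial_le_pow _
    _ ≤ (d ^ 2) ^ (2 * d) * d ^ 2 * (d ^ 2) ^ (2 * d - 1) := by gcongr
    _ = d ^ (8 * d) := by
        rw [← pow_mul, ← pow_mul, ← pow_add, ← pow_add]
        congr 1
        lia

lemma le_two_rpow_two_mul_log {x : ℝ} (hx : 1 ≤ x) : x ≤ 2 ^ (2 * Real.log x) := by
  have hlog : 0 ≤ Real.log x := Real.log_nonneg hx
  calc x = Real.exp (Real.log x) := (Real.exp_log (by linarith)).symm
    _ ≤ Real.exp (Real.log 2 * (2 * Real.log x)) :=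
        Real.exp_le_exp.2 (by nlinarith [Real.log_two_gt_d9])
    _ = 2 ^ (2 * Real.log x) := (Real.rpow_def_of_pos two_pos _).symm

lemma factorial_two_mul_mul_pow_le_two_rpow {d : ℕ} {τ : ℝ} (hd : 2 ≤ d) (hτ : 0 ≤ τ) :
    (2 * d)! * (2 * d) * ((d + 1) * ((2 : ℝ) ^ τ) ^ 2) ^ (2 * d - 1) ≤
      2 ^ (16 * (d * Real.log d + τ * d)) := by
  have h_two_rpow : 1 ≤ (2 : ℝ) ^ τ := Real.one_le_rpow one_le_two hτ
  have hdlog : (d : ℝ) ≤ 2 ^ (2 * Real.log d) := le_two_rpow_two_mul_log (by norm_cast; lia)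
  calc (2 * d)! * (2 * d) * ((d + 1) * ((2 : ℝ) ^ τ) ^ 2) ^ (2 * d - 1)
      = ((2 * d)! * (2 * d) * (d + 1) ^ (2 * d - 1) : ℕ) * ((2 : ℝ) ^ τ) ^ (2 * (2 * d - 1)) := by
        rw [mul_pow, ← pow_mul]
        push_cast
        ring
    _ ≤ (d ^ (8 * d) : ℕ) * ((2 : ℝ) ^ τ) ^ (16 * d) := by
        refine mul_le_mul ?_ (pow_le_pow_right₀ h_two_rpow (by lia)) (by positivity)
          (by positivity)
        exact_mod_cast factorial_two_mul_mul_pow_le_pow hd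
    _ ≤ ((2 : ℝ) ^ (2 * Real.log d)) ^ (8 * d) * ((2 : ℝ) ^ τ) ^ (16 * d) := by
        push_cast
        gcongr
    _ = 2 ^ (16 * (d * Real.log d + τ * d)) := by
        rw [← Real.rpow_mul_natCast two_pos.le, ← Real.rpow_mul_natCast two_pos.le,
          ← Real.rpow_add two_pos]
        push_cast
        ring_nf

end RootSeparation

/-- Separation bound for roots of two different bounded integer polynomials:
there is an absolute constant `C > 0` such that if `P₁, P₂` are nonzero integer
polynomials of degree at most `d` (with `d ≥ 2`) and coefficients of absolute
value at most `2^τ` (with `τ ≥ 1`), then any complex root `z₁` of `P₁` and any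
complex root `z₂` of `P₂` with `z₁ ≠ z₂` satisfy
`|z₁ - z₂| ≥ 2^{-C(d log d + τ d)}`. -/
theorem root_separation_bound_two_polys :
    ∃ C : ℝ, 0 < C ∧ ∀ (P₁ P₂ : Polynomial ℤ) (d : ℕ) (τ : ℝ),
      P₁ ≠ 0 → P₂ ≠ 0 → P₁.natDegree ≤ d → P₂.natDegree ≤ d → 2 ≤ d → 1 ≤ τ →
      (∀ i : ℕ, (|P₁.coeff i| : ℝ) ≤ (2 : ℝ) ^ τ) →
      (∀ i : ℕ, (|P₂.coeff i| : ℝ) ≤ (2 : ℝ) ^ τ) →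
      ∀ z₁ z₂ : ℂ, Polynomial.aeval z₁ P₁ = 0 → Polynomial.aeval z₂ P₂ = 0 →
        z₁ ≠ z₂ →
        (2 : ℝ) ^ (-(C * ((d : ℝ) * Real.log d + τ * d))) ≤ ‖z₁ - z₂‖ := by
  refine ⟨16, by norm_num, ?_⟩
  intro P₁ P₂ d τ hP₁ hP₂ hd₁ hd₂ hd hτ hB₁ hB₂ z₁ z₂ h₁ h₂ hne
  rw [Real.rpow_neg two_pos.le, inv_le_iff_one_le_mul₀' (by positivity)]
  calc (1 : ℝ)
      ≤ (2 * d)! * (2 * d) * ‖z₁ - z₂‖ * ((d + 1) * ((2 : ℝ) ^ τ) ^ 2) ^ (2 * d - 1) :=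
        one_le_norm_sub_mul_of_abs_coeff_le hP₁ hP₂ hd₁ hd₂ hB₁ hB₂ h₁ h₂ hne
    _ = (2 * d)! * (2 * d) * ((d + 1) * ((2 : ℝ) ^ τ) ^ 2) ^ (2 * d - 1) * ‖z₁ - z₂‖ := by ring
    _ ≤ 2 ^ (16 * (d * Real.log d + τ * d)) * ‖z₁ - z₂‖ := by
        gcongr
        exact factorial_two_mul_mul_pow_le_two_rpow hd (zero_le_one.trans hτ)
end

section
/- (Continuity of the limiting acceptance probability, Lemma 4.2.) Fix S ≥ 1, a basis index a, and let Γ = e_a e_a† be the projector onto the accept basis state. For b ∈ {0,1}, let F_b(ρ) = Σ_j F_j^{(b)} ρ (F_j^{(b)})† be a superoperator on S×S complex matrices given by a finite Kraus family with Σ_j (F_j^{(b)})† F_j^{(b)} = I, and define the coin-outcome superoperators ℰ_b(ρ) := Γ ρ Γ + F_b((I−Γ) ρ (I−Γ)), which incorporate a measurement of the accept state at each step. For p ∈ [0,1], let ℰ_p := p·ℰ₁ + (1−p)·ℰ₀. Fix a density matrix ρ₀ and define a(p) := lim_{t→∞} ⟨e_a, ℰ_p^t(ρ₀) e_a⟩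 (this limit exists because the accept entry ⟨e_a, ℰ_p^t(ρ₀) e_a⟩ is nondecreasing in t and bounded by 1). Then the function a(p) is continuous on the open interval (0,1). -/
open Matrix Filter
open scoped ComplexOrder

/-- One step of the advice-coin quantum machine with coin bias `p`: with
probability `p` apply the heads superoperator `ℰ₁`, with probability `1-p`
the tails superoperator `ℰ₀`, where `ℰ_b(ρ) = Γ ρ Γ + F_b((I-Γ) ρ (I-Γ))`
incorporates a measurement of the accept basis state `idx`
(`Γ = e_idx e_idx†` is the accept projector). -/
noncomputable def coinStep {S r₀ r₁ : ℕ} (idx : Fin S)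
    (F₀ : Fin r₀ → Matrix (Fin S) (Fin S) ℂ)
    (F₁ : Fin r₁ → Matrix (Fin S) (Fin S) ℂ)
    (p : ℝ) (ρ : Matrix (Fin S) (Fin S) ℂ) : Matrix (Fin S) (Fin S) ℂ :=
  let Γ : Matrix (Fin S) (Fin S) ℂ := Matrix.single idx idx 1
  (p : ℂ) • (Γ * ρ * Γ + ∑ j, F₁ j * ((1 - Γ) * ρ * (1 - Γ)) * (F₁ j)ᴴ) +
    ((1 - p : ℝ) : ℂ) • (Γ * ρ * Γ + ∑ j, F₀ j * ((1 - Γ) * ρ * (1 - Γ)) * (F₀ j)ᴴ)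

/-!
Write `ℰ_p` as one Kraus family whose operators do not depend on `p`, with weights that do; for
`0 < p < 1` all weights are positive. The accept state spans an enclosure (a subspace invariant
under every Kraus operator), and so do the vectors from which acceptance is unreachable; neither
subspace depends on `p`. The probability of having entered an enclosure never decreases. By
LaSalle's principle on the compact set of density matrices, the mass outside both enclosures tends
to `0`: a limit state would keep that mass constant, so its undecided part would never be accepted
and would therefore lie in the unreachable subspace, to which it is orthogonal. Hence the
acceptance probability `a` and `1 - a` are both increasing limits of continuous functions of `p`,
so `a` is both lower and upper semicontinuous.
-/

section Topology

variable {X Y : Type*} [TopologicalSpace X] [TopologicalSpace Y]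

theorem lowerSemicontinuousOn_of_monotone_tendsto [LinearOrder Y] [OrderTopology Y]
    {f : ℕ → X → Y} {F : X → Y} {s : Set X} (hf : ∀ t, LowerSemicontinuousOn (f t) s)
    (hmono : ∀ x ∈ s, Monotone (f · x)) (hlim : ∀ x ∈ s, Tendsto (f · x) atTop (nhds (F x))) :
    LowerSemicontinuousOn F s := by
  intro x hx y hy
  obtain ⟨t, ht⟩ := ((hlim x hx).eventually_const_lt hy).exists
  filter_upwards [hf t x hx y ht, self_mem_nhdsWithin] with z hz hzs
  exact hz.trans_le ((hmono z hzs).ge_of_tendsto (hlim z hzs) t)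

theorem continuousOn_of_monotone_tendsto_of_monotone_tendsto_sub
    {f g : ℕ → X → ℝ} {F : X → ℝ} {s : Set X} (r : ℝ)
    (hf : ∀ t, LowerSemicontinuousOn (f t) s) (hg : ∀ t, LowerSemicontinuousOn (g t) s)
    (hfmono : ∀ x ∈ s, Monotone (f · x)) (hgmono : ∀ x ∈ s, Monotone (g · x))
    (hflim : ∀ x ∈ s, Tendsto (f · x) atTop (nhds (F x)))
    (hglim : ∀ x ∈ s, Tendsto (g · x) atTop (nhds (r - F x))) :
    ContinuousOn F s := by
  refine continuousOn_iff_lower_upperSemicontinuousOn.mpr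
    ⟨lowerSemicontinuousOn_of_monotone_tendsto hf hfmono hflim, ?_⟩
  have lower_sub := lowerSemicontinuousOn_of_monotone_tendsto hg hgmono hglim
  have sub_antitone : Antitone (r - ·) := fun _ _ h ↦ sub_le_sub_left h r
  simpa [Function.comp_def] using
    (continuous_const.sub continuous_id).comp_lowerSemicontinuousOn_antitone
      lower_sub sub_antitone

-- LaSalle's invariance principle: any cluster point of the orbit will do.
theorem exists_mem_forall_iterate_eq_of_tendsto [T2Space Y] {f : X → X} (hf : Continuous f)
    {V : X → Y} (hV : Continuous V) {s : Set X} (hs : IsCompact s) {x : X}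
    (hx : ∀ t, f^[t] x ∈ s) {l : Y} (hl : Tendsto (fun t ↦ V (f^[t] x)) atTop (nhds l)) :
    ∃ z ∈ s, ∀ t, V (f^[t] z) = l := by
  obtain ⟨z, hz, hcluster⟩ := hs.exists_mapClusterPt (f := atTop) (u := fun t ↦ f^[t] x)
    (tendsto_principal.mpr (Eventually.of_forall hx))
  refine ⟨z, hz, fun t ↦ ?_⟩
  have hcluster_t : MapClusterPt (V (f^[t] z)) atTop fun k ↦ V (f^[t] (f^[k] x)) :=
    hcluster.tendsto_comp (f := V ∘ f^[t]) ((hV.comp (hf.iterate t)).tendsto z)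
  have hl_t : Tendsto (fun k ↦ V (f^[t] (f^[k] x))) atTop (nhds l) := by
    simpa only [← Function.iterate_add_apply, add_comm t, Function.comp_def] using
      hl.comp (tendsto_add_atTop_nat t)
  exact eq_of_nhds_neBot (hcluster_t.clusterPt.neBot.mono (inf_le_inf_left _ hl_t))

end Topology

section DensityMatrix

variable {𝕜 m n : Type*} [RCLike 𝕜] [Fintype m] [Fintype n]

open scoped MatrixOrder in
theorem posSemidef_trace_conj_eq_zero_iff {ρ : Matrix n n 𝕜} (hρ : ρ.PosSemidef)
    (X : Matrix m n 𝕜) : (X * ρ * Xᴴ).trace = 0 ↔ X * ρ = 0 := by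
  classical
  obtain ⟨B, rfl⟩ := CStarAlgebra.nonneg_iff_eq_star_mul_self.mp hρ.nonneg
  have factor : X * (Bᴴ * B) * Xᴴ = (X * Bᴴ) * (X * Bᴴ)ᴴ := by
    simp only [conjTranspose_mul, conjTranspose_conjTranspose, Matrix.mul_assoc]
  rw [star_eq_conjTranspose, factor, trace_mul_conjTranspose_self_eq_zero_iff,
    mul_conjTranspose_mul_self_eq_zero]

/-- A state of a finite-dimensional quantum system. -/
structure IsDensityMatrix (ρ : Matrix n n 𝕜) : Prop where
  posSemidef : ρ.PosSemidef
  trace_eq_one : ρ.trace = 1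

open scoped Matrix.Norms.Frobenius in
theorem trace_conjTranspose_mul_self_eq_frobenius_norm_sq (B : Matrix m n 𝕜) :
    (Bᴴ * B).trace = ((‖B‖ ^ 2 : ℝ) : 𝕜) := by
  have norm_sq : ‖B‖ ^ 2 = ∑ i, ∑ j, ‖B i j‖ ^ 2 := by
    rw [frobenius_norm_def, ← Real.sqrt_eq_rpow, Real.sq_sqrt (by positivity)]
    simp only [Real.rpow_two]
  rw [norm_sq, Finset.sum_comm]
  simp [trace, mul_apply, RCLike.conj_mul]

open scoped MatrixOrder Matrix.Norms.Frobenius in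
theorem isCompact_setOf_isDensityMatrix : IsCompact {ρ : Matrix n n 𝕜 | IsDensityMatrix ρ} := by
  classical
  have image_sphere : {ρ : Matrix n n 𝕜 | IsDensityMatrix ρ} =
      (fun B : Matrix n n 𝕜 ↦ Bᴴ * B) '' Metric.sphere 0 1 := by
    have trace_eq_one_iff (B : Matrix n n 𝕜) : (Bᴴ * B).trace = 1 ↔ ‖B‖ = 1 := by
      rw [trace_conjTranspose_mul_self_eq_frobenius_norm_sq, ← RCLike.ofReal_one,
        RCLike.ofReal_inj, pow_eq_one_iff_of_nonneg (norm_nonneg B) two_ne_zero]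
    ext ρ
    constructor
    · rintro ⟨hρ, htrace⟩
      obtain ⟨B, rfl⟩ := CStarAlgebra.nonneg_iff_eq_star_mul_self.mp hρ.nonneg
      exact ⟨B, by simpa using (trace_eq_one_iff B).mp htrace, rfl⟩
    · rintro ⟨B, hB, rfl⟩
      exact ⟨posSemidef_conjTranspose_mul_self B, (trace_eq_one_iff B).mpr (by simpa using hB)⟩
  have : ProperSpace (Matrix n n 𝕜) := FiniteDimensional.proper 𝕜 _
  rw [image_sphere]
  exact (isCompact_sphere 0 1).image (by fun_prop)

/-- The probability (Born's rule) that measuring the state `ρ` yields the outcome of the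
projector `P`. -/
noncomputable def bornProb (P ρ : Matrix n n 𝕜) : ℝ := RCLike.re (P * ρ).trace

theorem bornProb_add_left (P Q ρ : Matrix n n 𝕜) :
    bornProb (P + Q) ρ = bornProb P ρ + bornProb Q ρ := by
  simp [bornProb, Matrix.add_mul]

theorem bornProb_one_sub_left [DecidableEq n] (P ρ : Matrix n n 𝕜) :
    bornProb (1 - P) ρ = RCLike.re ρ.trace - bornProb P ρ := by
  simp [bornProb, Matrix.sub_mul]

theorem bornProb_single [DecidableEq n] (i : n) (ρ : Matrix n n 𝕜) :
    bornProb (single i i 1) ρ = RCLike.re (ρ i i) := by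
  simp [bornProb, trace_single_mul]

theorem continuous_bornProb (P : Matrix n n 𝕜) : Continuous (bornProb P) :=
  RCLike.continuous_re.comp (by fun_prop)

theorem re_trace_conj_eq_bornProb {P : Matrix n n 𝕜} (hP : IsStarProjection P)
    (ρ : Matrix n n 𝕜) : RCLike.re (P * ρ * P).trace = bornProb P ρ := by
  rw [bornProb, trace_mul_comm, ← Matrix.mul_assoc, hP.isIdempotentElem.eq]

theorem posSemidef_conj_isStarProjection {P ρ : Matrix n n 𝕜} (hP : IsStarProjection P)
    (hρ : ρ.PosSemidef) : (P * ρ * P).PosSemidef := by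
  simpa only [← star_eq_conjTranspose, hP.isSelfAdjoint.star_eq] using
    hρ.mul_mul_conjTranspose_same P

theorem bornProb_nonneg {P ρ : Matrix n n 𝕜} (hP : IsStarProjection P) (hρ : ρ.PosSemidef) :
    0 ≤ bornProb P ρ := by
  rw [← re_trace_conj_eq_bornProb hP]
  exact (RCLike.nonneg_iff.mp (posSemidef_conj_isStarProjection hP hρ).trace_nonneg).1

theorem bornProb_le_re_trace {P ρ : Matrix n n 𝕜} (hP : IsStarProjection P)
    (hρ : ρ.PosSemidef) : bornProb P ρ ≤ RCLike.re ρ.trace := by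
  classical
  have := bornProb_nonneg hP.one_sub hρ
  rw [bornProb_one_sub_left] at this
  linarith

theorem bornProb_eq_zero_iff {P ρ : Matrix n n 𝕜} (hP : IsStarProjection P)
    (hρ : ρ.PosSemidef) : bornProb P ρ = 0 ↔ P * ρ = 0 := by
  have him := (RCLike.nonneg_iff.mp (posSemidef_conj_isStarProjection hP hρ).trace_nonneg).2
  have hconj := posSemidef_trace_conj_eq_zero_iff hρ P
  rw [← star_eq_conjTranspose, hP.isSelfAdjoint.star_eq] at hconj
  rw [← re_trace_conj_eq_bornProb hP, ← hconj, RCLike.ext_iff (z := (P * ρ * P).trace), him]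
  simp

end DensityMatrix

section KrausMap

variable {𝕜 n ι : Type*} [RCLike 𝕜] [Fintype n] [Fintype ι]
  {K : ι → Matrix n n 𝕜} {c : ι → ℝ} {ρ : Matrix n n 𝕜}

/-- The completely positive map `ρ ↦ ∑ k, c k • K k ρ (K k)ᴴ`. The weights `c` are kept apart from
the Kraus operators `K` so that a family of such maps, indexed by `c`, shares its invariant
subspaces. -/
noncomputable def krausMap (K : ι → Matrix n n 𝕜) (c : ι → ℝ) :
    Module.End 𝕜 (Matrix n n 𝕜) :=
  ∑ k, c k • (LinearMap.mulLeft 𝕜 (K k) ∘ₗ LinearMap.mulRight 𝕜 (K k)ᴴ)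

theorem krausMap_apply (K : ι → Matrix n n 𝕜) (c : ι → ℝ) (ρ : Matrix n n 𝕜) :
    krausMap K c ρ = ∑ k, c k • (K k * ρ * (K k)ᴴ) := by
  simp [krausMap, Matrix.mul_assoc]

theorem continuous_krausMap (K : ι → Matrix n n 𝕜) (c : ι → ℝ) : Continuous (krausMap K c) := by
  simp only [funext (krausMap_apply K c)]
  fun_prop

theorem continuousOn_krausMap_pow_apply {X : Type*} [TopologicalSpace X] {s : Set X}
    {c : X → ι → ℝ} (hc : ContinuousOn c s) (K : ι → Matrix n n 𝕜) (ρ : Matrix n n 𝕜) (t : ℕ) :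
    ContinuousOn (fun x ↦ (krausMap K (c x) ^ t) ρ) s := by
  induction t with
  | zero => simpa using continuousOn_const
  | succ t ih =>
    simp only [pow_succ', Module.End.mul_apply, krausMap_apply]
    fun_prop

theorem posSemidef_krausMap_pow (hc : ∀ k, 0 ≤ c k) (hρ : ρ.PosSemidef) (t : ℕ) :
    ((krausMap K c ^ t) ρ).PosSemidef := by
  induction t with
  | zero => simpa using hρ
  | succ t ih =>
    rw [pow_succ', Module.End.mul_apply, krausMap_apply]
    exact posSemidef_sum _ fun k _ ↦ (ih.mul_mul_conjTranspose_same (K k)).smul (hc k)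

theorem bornProb_krausMap_pow_conj_eq_zero {G : Matrix n n 𝕜} (hG : IsStarProjection G)
    (hc : ∀ k, 0 < c k) (hρ : ρ.PosSemidef) (hzero : ∀ t, bornProb G ((krausMap K c ^ t) ρ) = 0)
    (k : ι) (t : ℕ) : bornProb G ((krausMap K c ^ t) (K k * ρ * (K k)ᴴ)) = 0 := by
  have expand : bornProb G ((krausMap K c ^ (t + 1)) ρ) =
      ∑ j, c j * bornProb G ((krausMap K c ^ t) (K j * ρ * (K j)ᴴ)) := by
    simp only [pow_succ, Module.End.mul_apply, krausMap_apply, bornProb, map_sum, Matrix.mul_sum,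
      trace_sum, LinearMap.map_smul_of_tower, Matrix.mul_smul, trace_smul, RCLike.smul_re]
  have term_nonneg (j : ι) : 0 ≤ c j * bornProb G ((krausMap K c ^ t) (K j * ρ * (K j)ᴴ)) :=
    mul_nonneg (hc j).le <| bornProb_nonneg hG <|
      posSemidef_krausMap_pow (fun i ↦ (hc i).le) (hρ.mul_mul_conjTranspose_same (K j)) t
  rw [hzero, eq_comm, Finset.sum_eq_zero_iff_of_nonneg fun j _ ↦ term_nonneg j] at expand
  exact (mul_eq_zero.mp (expand k (Finset.mem_univ k))).resolve_left (hc k).ne'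

variable [DecidableEq n]

theorem trace_krausMap_pow (hK : ∑ k, c k • ((K k)ᴴ * K k) = 1) (ρ : Matrix n n 𝕜) (t : ℕ) :
    ((krausMap K c ^ t) ρ).trace = ρ.trace := by
  induction t with
  | zero => simp
  | succ t ih =>
    rw [pow_succ', Module.End.mul_apply, ← ih]
    set σ := (krausMap K c ^ t) ρ
    calc (krausMap K c σ).trace = ∑ k, c k • ((K k)ᴴ * K k * σ).trace := by
          simp only [krausMap_apply, trace_sum, trace_smul, trace_mul_cycle (K _)]
      _ = ((∑ k, c k • ((K k)ᴴ * K k)) * σ).trace := by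
          simp only [Matrix.sum_mul, smul_mul, trace_sum, trace_smul]
      _ = σ.trace := by rw [hK, one_mul]

theorem IsDensityMatrix.krausMap_pow (hc : ∀ k, 0 ≤ c k)
    (hK : ∑ k, c k • ((K k)ᴴ * K k) = 1) (hρ : IsDensityMatrix ρ) (t : ℕ) :
    IsDensityMatrix ((krausMap K c ^ t) ρ) :=
  ⟨posSemidef_krausMap_pow hc hρ.posSemidef t, (trace_krausMap_pow hK ρ t).trans hρ.trace_eq_one⟩

end KrausMap

theorem mul_eq_zero_symm_of_isSelfAdjoint {R : Type*} [NonUnitalNonAssocSemiring R] [StarRing R]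
    {p q : R} (hp : IsSelfAdjoint p) (hq : IsSelfAdjoint q) (hpq : p * q = 0) : q * p = 0 := by
  simpa [hp.star_eq, hq.star_eq] using congr(star $hpq)

section Enclosure

variable {𝕜 n ι : Type*} [RCLike 𝕜] [Fintype n]
  {K : ι → Matrix n n 𝕜} {P Q : Matrix n n 𝕜}

/-- `P` is the orthogonal projection onto an enclosure of the Kraus operators `K`, i.e. onto a
subspace that every `K k` maps into itself. -/
structure IsEnclosure (K : ι → Matrix n n 𝕜) (P : Matrix n n 𝕜) : Prop
    extends IsStarProjection P where
  mul_proj (k : ι) : P * (K k * P) = K k * P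

theorem IsEnclosure.add (hP : IsEnclosure K P) (hQ : IsEnclosure K Q) (hPQ : P * Q = 0) :
    IsEnclosure K (P + Q) where
  toIsStarProjection := hP.toIsStarProjection.add hQ.toIsStarProjection hPQ
  mul_proj k := by
    have hQP : Q * P = 0 := mul_eq_zero_symm_of_isSelfAdjoint hP.isSelfAdjoint hQ.isSelfAdjoint hPQ
    have hPK : Q * (K k * P) = 0 := by
      rw [← hP.mul_proj, ← Matrix.mul_assoc, hQP, Matrix.zero_mul]
    have hQK : P * (K k * Q) = 0 := by
      rw [← hQ.mul_proj, ← Matrix.mul_assoc, hPQ, Matrix.zero_mul]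
    simp [Matrix.mul_add, Matrix.add_mul, hP.mul_proj, hQ.mul_proj, hPK, hQK]

variable [DecidableEq n]

theorem IsEnclosure.one_sub_mul (hP : IsEnclosure K P) (k : ι) :
    (1 - P) * K k * (1 - P) = (1 - P) * K k := by
  have annihilates : (1 - P) * (K k * P) = 0 := by
    rw [Matrix.sub_mul, Matrix.one_mul, hP.mul_proj, sub_self]
  rw [Matrix.mul_sub, Matrix.mul_one, Matrix.mul_assoc, annihilates, sub_zero]

variable [Fintype ι] {c : ι → ℝ} {ρ : Matrix n n 𝕜}

theorem IsEnclosure.conj_krausMap (hP : IsEnclosure K P) (c : ι → ℝ) (ρ : Matrix n n 𝕜) :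
    (1 - P) * krausMap K c ((1 - P) * ρ * (1 - P)) * (1 - P) =
      (1 - P) * krausMap K c ρ * (1 - P) := by
  have self_adjoint : (1 - P)ᴴ = 1 - P := hP.one_sub.isSelfAdjoint.star_eq
  have adjoint_mul (k : ι) : (1 - P) * ((K k)ᴴ * (1 - P)) = (K k)ᴴ * (1 - P) := by
    simpa only [conjTranspose_mul, self_adjoint] using congr(($(hP.one_sub_mul k))ᴴ)
  simp only [krausMap_apply, Matrix.mul_sum, Matrix.sum_mul, Matrix.mul_smul, smul_mul]
  refine Finset.sum_congr rfl fun k _ ↦ congrArg (c k • ·) ?_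
  calc (1 - P) * (K k * ((1 - P) * ρ * (1 - P)) * (K k)ᴴ) * (1 - P)
      = ((1 - P) * K k * (1 - P)) * ρ * ((1 - P) * ((K k)ᴴ * (1 - P))) := by
        simp only [Matrix.mul_assoc]
    _ = (1 - P) * (K k * ρ * (K k)ᴴ) * (1 - P) := by
        rw [hP.one_sub_mul, adjoint_mul]
        simp only [Matrix.mul_assoc]

theorem IsEnclosure.conj_krausMap_pow (hP : IsEnclosure K P) (c : ι → ℝ) (ρ : Matrix n n 𝕜)
    (t : ℕ) :
    (1 - P) * (krausMap K c ^ t) ((1 - P) * ρ * (1 - P)) * (1 - P) =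
      (1 - P) * (krausMap K c ^ t) ρ * (1 - P) := by
  induction t with
  | zero =>
    have idem := hP.one_sub.isIdempotentElem.eq
    simp only [pow_zero, Module.End.one_apply, Matrix.mul_assoc, idem]
    simp only [← Matrix.mul_assoc, idem]
  | succ t ih =>
    simp only [pow_succ', Module.End.mul_apply]
    rw [← hP.conj_krausMap, ih, hP.conj_krausMap]

theorem IsEnclosure.bornProb_one_sub_krausMap_pow_conj (hP : IsEnclosure K P) (c : ι → ℝ)
    (ρ : Matrix n n 𝕜) (t : ℕ) :
    bornProb (1 - P) ((krausMap K c ^ t) ((1 - P) * ρ * (1 - P))) =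
      bornProb (1 - P) ((krausMap K c ^ t) ρ) := by
  rw [← re_trace_conj_eq_bornProb hP.one_sub, hP.conj_krausMap_pow,
    re_trace_conj_eq_bornProb hP.one_sub]

theorem IsEnclosure.antitone_bornProb_one_sub_krausMap_pow (hP : IsEnclosure K P)
    (hc : ∀ k, 0 ≤ c k) (hK : ∑ k, c k • ((K k)ᴴ * K k) = 1) (hρ : ρ.PosSemidef) :
    Antitone fun t : ℕ ↦ bornProb (1 - P) ((krausMap K c ^ t) ρ) := by
  refine antitone_nat_of_succ_le fun t ↦ ?_
  have hσ : ((krausMap K c ^ t) ρ).PosSemidef := posSemidef_krausMap_pow hc hρ t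
  rw [pow_succ', Module.End.mul_apply]
  set σ := (krausMap K c ^ t) ρ
  set τ := (1 - P) * σ * (1 - P)
  have hτ : τ.PosSemidef := posSemidef_conj_isStarProjection hP.one_sub hσ
  calc bornProb (1 - P) (krausMap K c σ) = bornProb (1 - P) ((krausMap K c ^ 1) τ) := by
        rw [hP.bornProb_one_sub_krausMap_pow_conj, pow_one]
    _ ≤ RCLike.re ((krausMap K c ^ 1) τ).trace :=
        bornProb_le_re_trace hP.one_sub (posSemidef_krausMap_pow hc hτ 1)
    _ = bornProb (1 - P) σ := by
        rw [trace_krausMap_pow hK, re_trace_conj_eq_bornProb hP.one_sub]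

theorem IsEnclosure.monotone_bornProb_krausMap_pow (hP : IsEnclosure K P)
    (hc : ∀ k, 0 ≤ c k) (hK : ∑ k, c k • ((K k)ᴴ * K k) = 1) (hρ : ρ.PosSemidef) :
    Monotone fun t : ℕ ↦ bornProb P ((krausMap K c ^ t) ρ) := by
  intro t u htu
  have := hP.antitone_bornProb_one_sub_krausMap_pow hc hK hρ htu
  simpa only [bornProb_one_sub_left, trace_krausMap_pow hK, sub_le_sub_iff_left] using this

end Enclosure

section Unreachable

variable {𝕜 n ι : Type*} [RCLike 𝕜] [Fintype n] [DecidableEq n]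
  {K : ι → Matrix n n 𝕜} {G : Matrix n n 𝕜}

/-- The vectors from which no product of the Kraus operators `K` reaches `G`: the largest
`K`-invariant subspace of the kernel of `G`. -/
noncomputable def unreachableSubspace (K : ι → Matrix n n 𝕜) (G : Matrix n n 𝕜) :
    Submodule 𝕜 (EuclideanSpace 𝕜 n) :=
  ⨅ M ∈ Submonoid.closure (Set.range K), (toEuclideanCLM (𝕜 := 𝕜) (G * M)).ker

/-- The orthogonal projection onto `unreachableSubspace K G`, as a matrix. -/
noncomputable def unreachableProj (K : ι → Matrix n n 𝕜) (G : Matrix n n 𝕜) : Matrix n n 𝕜 :=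
  (toEuclideanCLM (n := n) (𝕜 := 𝕜)).symm (unreachableSubspace K G).starProjection

theorem unreachableProj_mul_eq_self_iff {X : Matrix n n 𝕜} :
    unreachableProj K G * X = X ↔ ∀ M ∈ Submonoid.closure (Set.range K), G * M * X = 0 := by
  let T := toEuclideanCLM (n := n) (𝕜 := 𝕜)
  have apply_proj : T (unreachableProj K G) = (unreachableSubspace K G).starProjection :=
    T.apply_symm_apply _
  have injective : Function.Injective T := T.injective
  calc unreachableProj K G * X = X
      ↔ ∀ v, T X v ∈ unreachableSubspace K G := by
        rw [← injective.eq_iff, map_mul, ContinuousLinearMap.ext_iff, apply_proj]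
        exact forall_congr' fun v ↦ Submodule.starProjection_eq_self_iff
    _ ↔ ∀ M ∈ Submonoid.closure (Set.range K), ∀ v, T (G * M) (T X v) = 0 := by
        simp only [unreachableSubspace, Submodule.mem_iInf]
        exact ⟨fun h M hM v ↦ h v M hM, fun h v M hM ↦ h M hM v⟩
    _ ↔ ∀ M ∈ Submonoid.closure (Set.range K), G * M * X = 0 := by
        refine forall₂_congr fun M _ ↦ ?_
        rw [← map_eq_zero_iff T injective, map_mul T (G * M) X, ContinuousLinearMap.ext_iff]
        rfl

theorem isStarProjection_unreachableProj (K : ι → Matrix n n 𝕜) (G : Matrix n n 𝕜) :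
    IsStarProjection (unreachableProj K G) :=
  IsStarProjection.map (A := EuclideanSpace 𝕜 n →L[𝕜] EuclideanSpace 𝕜 n)
    isStarProjection_starProjection (toEuclideanCLM (n := n) (𝕜 := 𝕜)).symm

theorem mul_unreachableProj {M : Matrix n n 𝕜} (hM : M ∈ Submonoid.closure (Set.range K)) :
    G * M * unreachableProj K G = 0 :=
  unreachableProj_mul_eq_self_iff.mp
    (isStarProjection_unreachableProj K G).isIdempotentElem.eq M hM

theorem isEnclosure_unreachableProj (K : ι → Matrix n n 𝕜) (G : Matrix n n 𝕜) :
    IsEnclosure K (unreachableProj K G) where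
  toIsStarProjection := isStarProjection_unreachableProj K G
  mul_proj k := by
    refine unreachableProj_mul_eq_self_iff.mpr fun M hM ↦ ?_
    have hMk : M * K k ∈ Submonoid.closure (Set.range K) :=
      mul_mem hM (Submonoid.subset_closure (Set.mem_range_self k))
    simpa only [Matrix.mul_assoc] using mul_unreachableProj (G := G) hMk

theorem mul_unreachableProj_self (K : ι → Matrix n n 𝕜) (G : Matrix n n 𝕜) :
    G * unreachableProj K G = 0 := by
  simpa using mul_unreachableProj (G := G) (one_mem (Submonoid.closure (Set.range K)))

theorem IsEnclosure.add_unreachableProj (hG : IsEnclosure K G) :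
    IsEnclosure K (G + unreachableProj K G) :=
  hG.add (isEnclosure_unreachableProj K G) (mul_unreachableProj_self K G)

variable [Fintype ι] {c : ι → ℝ} {ρ : Matrix n n 𝕜}

theorem bornProb_conj_eq_zero_of_mem_closure (hG : IsStarProjection G) (hc : ∀ k, 0 < c k)
    (hρ : ρ.PosSemidef) (hzero : ∀ t, bornProb G ((krausMap K c ^ t) ρ) = 0)
    {M : Matrix n n 𝕜} (hM : M ∈ Submonoid.closure (Set.range K)) (t : ℕ) :
    bornProb G ((krausMap K c ^ t) (M * ρ * Mᴴ)) = 0 := by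
  induction hM using Submonoid.closure_induction generalizing ρ t with
  | mem M hM =>
    obtain ⟨k, rfl⟩ := hM
    exact bornProb_krausMap_pow_conj_eq_zero hG hc hρ hzero k t
  | one => simpa using hzero t
  | mul M N _ _ ihM ihN =>
    have := ihM (hρ.mul_mul_conjTranspose_same N) (ihN hρ hzero) t
    simpa only [conjTranspose_mul, Matrix.mul_assoc] using this

theorem unreachableProj_mul_eq_self_of_bornProb_eq_zero (hG : IsStarProjection G)
    (hc : ∀ k, 0 < c k) (hρ : ρ.PosSemidef)
    (hzero : ∀ t, bornProb G ((krausMap K c ^ t) ρ) = 0) : unreachableProj K G * ρ = ρ := by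
  refine unreachableProj_mul_eq_self_iff.mpr fun M hM ↦ ?_
  have hGM : G * (M * ρ * Mᴴ) = 0 :=
    (bornProb_eq_zero_iff hG (hρ.mul_mul_conjTranspose_same M)).mp
      (bornProb_conj_eq_zero_of_mem_closure hG hc hρ hzero hM 0)
  refine (posSemidef_trace_conj_eq_zero_iff hρ (G * M)).mp ?_
  have : G * M * ρ * (G * M)ᴴ = G * (M * ρ * Mᴴ) * Gᴴ := by
    simp only [conjTranspose_mul, Matrix.mul_assoc]
  rw [this, hGM, Matrix.zero_mul, trace_zero]

end Unreachable

section Absorption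

variable {𝕜 n ι : Type*} [RCLike 𝕜] [Fintype n] [DecidableEq n] [Fintype ι]
  {K : ι → Matrix n n 𝕜} {G ρ : Matrix n n 𝕜} {c : ι → ℝ}

theorem IsEnclosure.bornProb_undecided_eq_zero_of_forall_eq (hG : IsEnclosure K G)
    (hc : ∀ k, 0 < c k) (hK : ∑ k, c k • ((K k)ᴴ * K k) = 1) (hρ : ρ.PosSemidef) {l : ℝ}
    (hconst : ∀ t, bornProb (1 - (G + unreachableProj K G)) ((krausMap K c ^ t) ρ) = l) :
    l = 0 := by
  set R := unreachableProj K G with hR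
  have hGR : IsEnclosure K (G + R) := hG.add_unreachableProj
  have hRproj : IsStarProjection R := isStarProjection_unreachableProj K G
  set Q := 1 - (G + R) with hQ
  have hQproj : IsStarProjection Q := hGR.one_sub
  set τ := Q * ρ * Q with hτ
  have hτpos : τ.PosSemidef := posSemidef_conj_isStarProjection hQproj hρ
  have trace_τ : RCLike.re τ.trace = l := by
    rw [re_trace_conj_eq_bornProb hQproj, ← hconst 0, pow_zero, Module.End.one_apply]
  have never_reaches (t : ℕ) : bornProb G ((krausMap K c ^ t) τ) = 0 := by
    have hτt := posSemidef_krausMap_pow (K := K) (fun k ↦ (hc k).le) hτpos t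
    have undecided : bornProb Q ((krausMap K c ^ t) τ) = l :=
      (hGR.bornProb_one_sub_krausMap_pow_conj c ρ t).trans (hconst t)
    rw [bornProb_one_sub_left, bornProb_add_left, trace_krausMap_pow hK, trace_τ] at undecided
    linarith [bornProb_nonneg hG.toIsStarProjection hτt, bornProb_nonneg hRproj hτt]
  have R_mul_Q : R * Q = 0 := by
    have R_mul_G : R * G = 0 := mul_eq_zero_symm_of_isSelfAdjoint hG.isSelfAdjoint
      hRproj.isSelfAdjoint (mul_unreachableProj_self K G)
    rw [hQ, Matrix.mul_sub, Matrix.mul_add, R_mul_G, hRproj.isIdempotentElem.eq]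
    simp
  have τ_eq_zero : τ = 0 := by
    rw [← unreachableProj_mul_eq_self_of_bornProb_eq_zero hG.toIsStarProjection hc hτpos
      never_reaches, ← hR, hτ, Matrix.mul_assoc, ← Matrix.mul_assoc, R_mul_Q, Matrix.zero_mul]
  rw [← trace_τ, τ_eq_zero, trace_zero, map_zero]

theorem IsEnclosure.tendsto_bornProb_undecided (hG : IsEnclosure K G) (hc : ∀ k, 0 < c k)
    (hK : ∑ k, c k • ((K k)ᴴ * K k) = 1) (hρ : IsDensityMatrix ρ) :
    Tendsto (fun t : ℕ ↦ bornProb (1 - (G + unreachableProj K G)) ((krausMap K c ^ t) ρ))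
      atTop (nhds 0) := by
  have hGR := hG.add_unreachableProj
  have hc' (k : ι) : 0 ≤ c k := (hc k).le
  have hdensity := hρ.krausMap_pow hc' hK
  have bounded : BddBelow (Set.range fun t : ℕ ↦
      bornProb (1 - (G + unreachableProj K G)) ((krausMap K c ^ t) ρ)) :=
    ⟨0, Set.forall_mem_range.mpr fun t ↦ bornProb_nonneg hGR.one_sub (hdensity t).posSemidef⟩
  have hlim := tendsto_atTop_ciInf
    (hGR.antitone_bornProb_one_sub_krausMap_pow hc' hK hρ.posSemidef) bounded
  obtain ⟨σ, hσ, hconst⟩ := exists_mem_forall_iterate_eq_of_tendsto (continuous_krausMap K c)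
    (continuous_bornProb _) isCompact_setOf_isDensityMatrix
    (fun t ↦ by simpa only [Module.End.coe_pow, Set.mem_ofPred_eq] using hdensity t)
    (by simpa only [Module.End.coe_pow] using hlim)
  simp only [← Module.End.coe_pow] at hconst
  rwa [hG.bornProb_undecided_eq_zero_of_forall_eq hc hK hσ.posSemidef hconst] at hlim

theorem IsEnclosure.tendsto_bornProb_unreachableProj (hG : IsEnclosure K G) (hc : ∀ k, 0 < c k)
    (hK : ∑ k, c k • ((K k)ᴴ * K k) = 1) (hρ : IsDensityMatrix ρ) {a : ℝ}
    (ha : Tendsto (fun t : ℕ ↦ bornProb G ((krausMap K c ^ t) ρ)) atTop (nhds a)) :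
    Tendsto (fun t : ℕ ↦ bornProb (unreachableProj K G) ((krausMap K c ^ t) ρ)) atTop
      (nhds (1 - a)) := by
  have := (ha.const_sub 1).sub (hG.tendsto_bornProb_undecided hc hK hρ)
  simp only [bornProb_one_sub_left, bornProb_add_left, trace_krausMap_pow hK, hρ.trace_eq_one,
    RCLike.one_re, sub_zero] at this
  exact this.congr fun t ↦ by ring

theorem IsEnclosure.continuousOn_lim_bornProb {X : Type*} [TopologicalSpace X] {s : Set X}
    {c : X → ι → ℝ} {a : X → ℝ} (hG : IsEnclosure K G) (hcont : ContinuousOn c s)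
    (hc : ∀ x ∈ s, ∀ k, 0 < c x k) (hK : ∀ x ∈ s, ∑ k, c x k • ((K k)ᴴ * K k) = 1)
    (hρ : IsDensityMatrix ρ)
    (ha : ∀ x ∈ s, Tendsto (fun t : ℕ ↦ bornProb G ((krausMap K (c x) ^ t) ρ)) atTop
      (nhds (a x))) :
    ContinuousOn a s := by
  have continuous_prob (P : Matrix n n 𝕜) (t : ℕ) :
      ContinuousOn (fun x ↦ bornProb P ((krausMap K (c x) ^ t) ρ)) s :=
    (continuous_bornProb P).comp_continuousOn (continuousOn_krausMap_pow_apply hcont K ρ t)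
  have monotone_prob {P : Matrix n n 𝕜} (hP : IsEnclosure K P) (x : X) (hx : x ∈ s) :
      Monotone fun t : ℕ ↦ bornProb P ((krausMap K (c x) ^ t) ρ) :=
    hP.monotone_bornProb_krausMap_pow (fun k ↦ (hc x hx k).le) (hK x hx) hρ.posSemidef
  exact continuousOn_of_monotone_tendsto_of_monotone_tendsto_sub 1
    (fun t ↦ (continuous_prob G t).lowerSemicontinuousOn)
    (fun t ↦ (continuous_prob (unreachableProj K G) t).lowerSemicontinuousOn)
    (monotone_prob hG) (monotone_prob (isEnclosure_unreachableProj K G)) ha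
    fun x hx ↦ hG.tendsto_bornProb_unreachableProj (hc x hx) (hK x hx) hρ (ha x hx)

end Absorption

section CoinMachine

variable {𝕜 n ι₀ ι₁ : Type*} [RCLike 𝕜] [Fintype n] [DecidableEq n] {Γ : Matrix n n 𝕜}

/-- The Kraus operators of the coin machine with accept projector `Γ`: the measurement outcome
accept, followed by the heads operators `F₁` and the tails operators `F₀`, both restricted to the
outcome not accept. -/
def coinKraus (Γ : Matrix n n 𝕜) (F₀ : ι₀ → Matrix n n 𝕜) (F₁ : ι₁ → Matrix n n 𝕜) :
    Option (ι₁ ⊕ ι₀) → Matrix n n 𝕜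
  | none => Γ
  | some (.inl j) => F₁ j * (1 - Γ)
  | some (.inr j) => F₀ j * (1 - Γ)

/-- The weights of the operators `coinKraus` for a coin of bias `p`. -/
def coinWeight (ι₀ ι₁ : Type*) (p : ℝ) : Option (ι₁ ⊕ ι₀) → ℝ
  | none => 1
  | some (.inl _) => p
  | some (.inr _) => 1 - p

theorem continuous_coinWeight (ι₀ ι₁ : Type*) : Continuous (coinWeight ι₀ ι₁) := by
  refine continuous_pi ?_
  rintro (_ | _ | _) <;> simp only [coinWeight] <;> fun_prop

theorem coinWeight_pos {p : ℝ} (hp : p ∈ Set.Ioo (0 : ℝ) 1) (k : Option (ι₁ ⊕ ι₀)) :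
    0 < coinWeight ι₀ ι₁ p k := by
  rcases k with _ | _ | _ <;> simp [coinWeight, hp.1, hp.2]

theorem coinWeight_nonneg {p : ℝ} (hp : p ∈ Set.Icc (0 : ℝ) 1) (k : Option (ι₁ ⊕ ι₀)) :
    0 ≤ coinWeight ι₀ ι₁ p k := by
  rcases k with _ | _ | _ <;> simp [coinWeight, hp.1, hp.2]

theorem isEnclosure_coinKraus (hΓ : IsStarProjection Γ) (F₀ : ι₀ → Matrix n n 𝕜)
    (F₁ : ι₁ → Matrix n n 𝕜) : IsEnclosure (coinKraus Γ F₀ F₁) Γ where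
  toIsStarProjection := hΓ
  mul_proj := by
    rintro (_ | j | j) <;>
      simp [coinKraus, Matrix.mul_assoc, hΓ.one_sub_mul_self, hΓ.isIdempotentElem.eq]

theorem sum_conjTranspose_mul_self_mul_proj {ι : Type*} [Fintype ι] {F : ι → Matrix n n 𝕜}
    (hF : ∑ j, (F j)ᴴ * F j = 1) {P : Matrix n n 𝕜} (hP : IsStarProjection P) :
    ∑ j, (F j * P)ᴴ * (F j * P) = P :=
  calc ∑ j, (F j * P)ᴴ * (F j * P) = Pᴴ * (∑ j, (F j)ᴴ * F j) * P := by
        simp only [conjTranspose_mul, Matrix.mul_sum, Matrix.sum_mul, Matrix.mul_assoc]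
    _ = P := by
        rw [hF, Matrix.mul_one, ← star_eq_conjTranspose, hP.isSelfAdjoint.star_eq,
          hP.isIdempotentElem.eq]

variable [Fintype ι₀] [Fintype ι₁]

theorem sum_coinWeight_smul_coinKraus {F₀ : ι₀ → Matrix n n 𝕜} {F₁ : ι₁ → Matrix n n 𝕜}
    (hΓ : IsStarProjection Γ) (hF₀ : ∑ j, (F₀ j)ᴴ * F₀ j = 1)
    (hF₁ : ∑ j, (F₁ j)ᴴ * F₁ j = 1) (p : ℝ) :
    ∑ k, coinWeight ι₀ ι₁ p k • ((coinKraus Γ F₀ F₁ k)ᴴ * coinKraus Γ F₀ F₁ k) = 1 := by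
  have hΓΓ : Γᴴ * Γ = Γ := by
    rw [← star_eq_conjTranspose, hΓ.isSelfAdjoint.star_eq, hΓ.isIdempotentElem.eq]
  simp only [Fintype.sum_option, Fintype.sum_sum_type, coinKraus, coinWeight, ← Finset.smul_sum,
    sum_conjTranspose_mul_self_mul_proj hF₀ hΓ.one_sub,
    sum_conjTranspose_mul_self_mul_proj hF₁ hΓ.one_sub, hΓΓ, ← add_smul]
  simp

end CoinMachine

theorem isStarProjection_single {R n : Type*} [Semiring R] [StarRing R] [Fintype n]
    [DecidableEq n] (i : n) : IsStarProjection (single i i (1 : R)) :=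
  isStarProjection_iff'.mpr ⟨by simp, by simp [star_eq_conjTranspose]⟩

theorem coinStep_eq_krausMap {S r₀ r₁ : ℕ} (idx : Fin S)
    (F₀ : Fin r₀ → Matrix (Fin S) (Fin S) ℂ) (F₁ : Fin r₁ → Matrix (Fin S) (Fin S) ℂ) (p : ℝ) :
    coinStep idx F₀ F₁ p =
      krausMap (coinKraus (single idx idx 1) F₀ F₁) (coinWeight (Fin r₀) (Fin r₁) p) := by
  funext ρ
  have self_adjoint : (1 - single idx idx (1 : ℂ))ᴴ = 1 - single idx idx 1 :=
    (isStarProjection_single idx).one_sub.isSelfAdjoint.star_eq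
  simp only [coinStep, krausMap_apply, Fintype.sum_option, Fintype.sum_sum_type, coinKraus,
    coinWeight, conjTranspose_mul, self_adjoint, Matrix.mul_assoc, ← Finset.smul_sum,
    Complex.coe_smul, conjTranspose_single, star_one]
  module

theorem posSemidef_coinStep_iterate {S r₀ r₁ : ℕ} (idx : Fin S)
    (F₀ : Fin r₀ → Matrix (Fin S) (Fin S) ℂ) (F₁ : Fin r₁ → Matrix (Fin S) (Fin S) ℂ) {p : ℝ}
    (hp : p ∈ Set.Icc (0 : ℝ) 1) {ρ : Matrix (Fin S) (Fin S) ℂ} (hρ : ρ.PosSemidef) (t : ℕ) :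
    ((coinStep idx F₀ F₁ p)^[t] ρ).PosSemidef := by
  rw [coinStep_eq_krausMap, ← Module.End.coe_pow]
  exact posSemidef_krausMap_pow (coinWeight_nonneg hp) hρ t

/-- Continuity of the limiting acceptance probability (Lemma 4.2): the limiting
accept-entry `a(p) = lim_t ⟨e_idx, ℰ_p^t(ρ₀) e_idx⟩` of the advice-coin quantum
machine is continuous in the coin bias `p` on the open interval `(0,1)`. -/
theorem limiting_acceptance_continuous {S r₀ r₁ : ℕ} (hS : 1 ≤ S) (idx : Fin S)
    (F₀ : Fin r₀ → Matrix (Fin S) (Fin S) ℂ)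
    (F₁ : Fin r₁ → Matrix (Fin S) (Fin S) ℂ)
    (hF₀ : ∑ j, (F₀ j)ᴴ * F₀ j = 1) (hF₁ : ∑ j, (F₁ j)ᴴ * F₁ j = 1)
    (ρ₀ : Matrix (Fin S) (Fin S) ℂ) (hρ₀ : ρ₀.PosSemidef ∧ ρ₀.trace = 1)
    (aFun : ℝ → ℂ)
    (haFun : ∀ p : ℝ, p ∈ Set.Icc (0:ℝ) 1 →
      Tendsto (fun t : ℕ => ((coinStep idx F₀ F₁ p)^[t] ρ₀) idx idx)
        atTop (nhds (aFun p))) :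
    ContinuousOn aFun (Set.Ioo (0:ℝ) 1) := by
  have hΓ : IsStarProjection (single idx idx (1 : ℂ)) := isStarProjection_single idx
  have hre : ContinuousOn (fun p ↦ (aFun p).re) (Set.Ioo 0 1) := by
    refine (isEnclosure_coinKraus hΓ F₀ F₁).continuousOn_lim_bornProb
      (continuous_coinWeight _ _).continuousOn (fun p hp ↦ coinWeight_pos hp)
      (fun p _ ↦ sum_coinWeight_smul_coinKraus hΓ hF₀ hF₁ p) ⟨hρ₀.1, hρ₀.2⟩ fun p hp ↦ ?_
    simp only [bornProb_single, Module.End.coe_pow, ← coinStep_eq_krausMap]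
    exact (Complex.continuous_re.tendsto _).comp (haFun p (Set.Ioo_subset_Icc_self hp))
  have aFun_real (p : ℝ) (hp : p ∈ Set.Ioo 0 1) : aFun p = (aFun p).re := by
    have hp' := Set.Ioo_subset_Icc_self hp
    refine tendsto_nhds_unique ((haFun p hp').congr fun t ↦ ?_) <|
      ((Complex.continuous_ofReal.comp Complex.continuous_re).tendsto _).comp (haFun p hp')
    exact ((posSemidef_coinStep_iterate idx F₀ F₁ hp' hρ₀.1 t).isHermitian.coe_re_apply_self
      idx).symm
  exact (Complex.continuous_ofReal.comp_continuousOn hre).congr aFun_real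
end
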